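/- Let A, B, C be a maximal positive solution of the SU(2) negative cross curvature flow ODE system with A_0 ≥ B_0 ≥ C_0 > 0. Then d(A^2)/dt ≤ -4 C_0^2/A_0^2 along the solution, so there is a finite time T_0 > 0 at which the solution ceases to exist with A(t), B(t), C(t) → 0 as t → T_0^-; moreover, for all t ∈ [0, T_0), sqrt(48(T_0 - t)) · A_0^2/C_0^2 ≥ A(t) ≥ 2 sqrt(T_0 - t) · C_0/A_0. -/

import Mathlib

/-!
For ordered triples `A ≥ B ≥ C > 0` one has `C² ≤ -Y ≤ 3A²` and `C² ≤ -Z ≤ 3A²`. The ordering is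
preserved because `A - B` and `B - C` solve scalar linear equations (`su2_ordered`), and then
`A / C` is nonincreasing because `Y ≤ 0` (`su2_ratio_antitone`). Together these give, for
`(A²)' = -4 Y Z / (B C)²`, the bounds
`-48 A0⁴ / C0⁴ ≤ (A²)' ≤ -4 C0² / A0²` (`su2_curv_bounds`).

The upper bound forces the lifespan to be finite. If `A`, which is nonincreasing, stayed above some
`e > 0`, then `C ≥ e C0 / A0`, so the solution would remain in a compact set of positive triples;
it would have a limit at the final time and could be continued past it by Picard–Lindelöf,
contradicting maximality (`exists_lt_of_isMaxSolSU2`). Hence `A → 0`, and `B`, `C` are squeezed.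
Integrating the two bounds on `(A²)'` from `t` to the final time gives the estimates on `A t`.
-/

/-- The quantity `X = 3A² - (B-C)² - 2AB - 2AC` of the `SU(2)` cross curvature tensor. -/
def su2X (A B C : ℝ) : ℝ := 3 * A ^ 2 - (B - C) ^ 2 - 2 * A * B - 2 * A * C

/-- The quantity `Y = 3B² - (A-C)² - 2AB - 2BC` of the `SU(2)` cross curvature tensor. -/
def su2Y (A B C : ℝ) : ℝ := 3 * B ^ 2 - (A - C) ^ 2 - 2 * A * B - 2 * B * C

/-- The quantity `Z = 3C² - (A-B)² - 2BC - 2AC` of the `SU(2)` cross curvature tensor. -/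
def su2Z (A B C : ℝ) : ℝ := 3 * C ^ 2 - (A - B) ^ 2 - 2 * B * C - 2 * A * C

/-- A triple of functions solves the `SU(2)` negative cross curvature flow ODE system
(with positivity) on a set `s ⊆ ℝ`. -/
def IsSolSU2 (A B C : ℝ → ℝ) (s : Set ℝ) : Prop :=
  ∀ t ∈ s,
    (0 < A t ∧ 0 < B t ∧ 0 < C t) ∧
    HasDerivAt A
      (-2 * A t * su2Y (A t) (B t) (C t) * su2Z (A t) (B t) (C t) /
        (A t * B t * C t) ^ 2) t ∧
    HasDerivAt B
      (-2 * B t * su2Z (A t) (B t) (C t) * su2X (A t) (B t) (C t) /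
        (A t * B t * C t) ^ 2) t ∧
    HasDerivAt C
      (-2 * C t * su2X (A t) (B t) (C t) * su2Y (A t) (B t) (C t) /
        (A t * B t * C t) ^ 2) t

/-- A maximal solution of the `SU(2)` system on `{t | 0 ≤ t, t < T}` (`T ∈ (0,∞]` an
extended real): it is a solution that admits no extension to a strictly larger interval. -/
def IsMaxSolSU2 (A B C : ℝ → ℝ) (T : EReal) : Prop :=
  IsSolSU2 A B C {t : ℝ | 0 ≤ t ∧ (t : EReal) < T} ∧
  ∀ (A' B' C' : ℝ → ℝ) (T' : EReal), T < T' →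
    IsSolSU2 A' B' C' {t : ℝ | 0 ≤ t ∧ (t : EReal) < T'} →
    ¬ (∀ t : ℝ, 0 ≤ t → (t : EReal) < T → A' t = A t ∧ B' t = B t ∧ C' t = C t)

open Filter Topology Set

/-- A solution of a scalar linear equation `u' = k u` keeps a nonnegative sign. With `|k| ≤ K`,
`-u` cannot cross the barrier `ε * exp ((K + 1) t)`, for any `ε > 0`. -/
theorem nonneg_of_deriv_eq_mul {u k : ℝ → ℝ} {b : ℝ} (hb : 0 ≤ b)
    (hk : ContinuousOn k (Icc 0 b))
    (hu : ∀ t ∈ Icc 0 b, HasDerivAt u (k t * u t) t) (h0 : 0 ≤ u 0) : 0 ≤ u b := by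
  obtain ⟨K, hK⟩ := isCompact_Icc.exists_bound_of_continuousOn hk
  have key : ∀ ε > 0, -u b ≤ ε * Real.exp ((K + 1) * b) := by
    intro ε hε
    refine image_le_of_deriv_right_lt_deriv_boundary' (f := fun t => -u t)
      (f' := fun t => -(k t * u t)) (B := fun t => ε * Real.exp ((K + 1) * t))
      (B' := fun t => ε * (Real.exp ((K + 1) * t) * (K + 1))) (a := 0) (b := b)
      (fun t ht => (hu t ht).continuousAt.neg.continuousWithinAt)
      (fun t ht => (hu t (Ico_subset_Icc_self ht)).neg.hasDerivWithinAt)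
      ?_ (by fun_prop) ?_ ?_ (right_mem_Icc.2 hb)
    · simp; linarith
    · intro t ht
      have h1 : HasDerivAt (fun t : ℝ => (K + 1) * t) (K + 1) t := by
        simpa using (hasDerivAt_id t).const_mul (K + 1)
      exact (h1.exp.const_mul ε).hasDerivWithinAt
    · intro t ht heq
      have hkt := le_of_abs_le (hK t (Ico_subset_Icc_self ht))
      have hpos : 0 < ε * Real.exp ((K + 1) * t) := by positivity
      have : -(k t * u t) = k t * (ε * Real.exp ((K + 1) * t)) := by rw [← heq]; ring
      rw [this]
      nlinarith
  by_contra hneg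
  push Not at hneg
  have h := key (-u b / 2 / Real.exp ((K + 1) * b)) (by
    apply div_pos <;> [linarith; positivity])
  rw [div_mul_cancel₀ _ (Real.exp_pos _).ne'] at h
  linarith

/-- A curve with bounded derivative on `[a, b)` is Lipschitz there, hence has a limit at `b`. -/
theorem exists_tendsto_of_deriv_bounded {E : Type*} [NormedAddCommGroup E] [NormedSpace ℝ E]
    [CompleteSpace E] {γ γ' : ℝ → E} {a b M : ℝ} (hab : a < b)
    (hγ : ∀ t ∈ Ico a b, HasDerivAt γ (γ' t) t) (hM : ∀ t ∈ Ico a b, ‖γ' t‖ ≤ M) :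
    ∃ p, Tendsto γ (𝓝[<] b) (𝓝 p) := by
  rw [← cauchy_map_iff_exists_tendsto]
  have hM0 : 0 ≤ M := (norm_nonneg _).trans (hM a ⟨le_rfl, hab⟩)
  have hL : LipschitzOnWith ⟨M, hM0⟩ γ (Ico a b) :=
    (convex_Ico a b).lipschitzOnWith_of_nnnorm_hasDerivWithin_le
      (fun t ht => (hγ t ht).hasDerivWithinAt) (fun t ht => hM t ht)
  rw [Metric.cauchy_iff]
  refine ⟨inferInstance, fun ε hε => ?_⟩
  set δ := ε / (M + 1) with hδ
  have hδ0 : 0 < δ := by positivity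
  refine ⟨Set.image γ (Ioo (max a (b - δ)) b),
    image_mem_map (Ioo_mem_nhdsLT (by simp [hab, hδ0])), ?_⟩
  rintro _ ⟨x, hx, rfl⟩ _ ⟨y, hy, rfl⟩
  have hxl := max_lt_iff.1 hx.1
  have hyl := max_lt_iff.1 hy.1
  have h1 := hL.dist_le_mul x ⟨hxl.1.le, hx.2⟩ y ⟨hyl.1.le, hy.2⟩
  have h2 : dist x y ≤ δ := by
    rw [Real.dist_eq, abs_le]; constructor <;> linarith [hx.2, hy.2]
  calc dist (γ x) (γ y) ≤ M * dist x y := h1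
    _ ≤ M * δ := by gcongr
    _ < (M + 1) * δ := by nlinarith
    _ = ε := by rw [hδ]; field_simp

/-- A solution of `γ' = F(γ)` on `[a, b)` that converges at `b` to a point where `F` is `C¹` extends
beyond `b`, by gluing with a local solution through the limit point. The set `U` records an open
condition at the limit point that the extension can be made to satisfy. -/
theorem exists_extension {E : Type*} [NormedAddCommGroup E] [NormedSpace ℝ E] [CompleteSpace E]
    {F : E → E} {γ : ℝ → E} {a b : ℝ} {p : E} {U : Set E} (hab : a < b)
    (hγ : ∀ t ∈ Ico a b, HasDerivAt γ (F (γ t)) t) (hp : Tendsto γ (𝓝[<] b) (𝓝 p))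
    (hF : ContDiffAt ℝ 1 F p) (hU : U ∈ 𝓝 p) :
    ∃ (β : ℝ → E) (ε : ℝ), 0 < ε ∧ (∀ t < b, β t = γ t) ∧ (∀ t ∈ Ico b (b + ε), β t ∈ U) ∧
      ∀ t ∈ Ico a (b + ε), HasDerivAt β (F (β t)) t := by
  obtain ⟨α, hαb, ε₀, hε₀, hα⟩ :=
    hF.exists_forall_mem_closedBall_exists_eq_forall_mem_Ioo_hasDerivAt₀ b
  have hαc : ContinuousAt α b := (hα b ⟨by linarith, by linarith⟩).continuousAt
  have hαU : ∀ᶠ t in 𝓝 b, α t ∈ U := hαc (by rwa [hαb])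
  obtain ⟨ε₁, hε₁, hU₁⟩ := Metric.eventually_nhds_iff.1 hαU
  set β : ℝ → E := fun t => if t < b then γ t else α t with hβ
  have hβl : ∀ t < b, β t = γ t := fun t ht => if_pos ht
  have hβr : ∀ t, b ≤ t → β t = α t := fun t ht => if_neg ht.not_gt
  have hdl : ∀ t ∈ Ico a b, HasDerivAt β (F (β t)) t := by
    intro t ht
    rw [hβl t ht.2]
    refine (hγ t ht).congr_of_eventuallyEq ?_
    filter_upwards [Iio_mem_nhds ht.2] with s hs using hβl s hs
  have hβlim : Tendsto β (𝓝[<] b) (𝓝 p) :=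
    hp.congr' (by filter_upwards [self_mem_nhdsWithin] with s hs using (hβl s hs).symm)
  have hmem : Ico a b ∈ 𝓝[<] b := Ico_mem_nhdsLT hab
  have hβb : β b = p := (hβr b le_rfl).trans hαb
  refine ⟨β, min ε₀ ε₁, lt_min hε₀ hε₁, hβl, ?_, ?_⟩
  · intro t ht
    rw [hβr t ht.1]
    refine hU₁ ?_
    rw [Real.dist_eq, abs_of_nonneg (by linarith [ht.1])]
    linarith [ht.2, min_le_right ε₀ ε₁]
  · intro t ht
    rcases lt_trichotomy t b with h | rfl | h
    · exact hdl t ⟨ht.1, h⟩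
    · have hr : HasDerivWithinAt β (F (β t)) (Ici t) t := by
        have := (hα t ⟨by linarith, by linarith⟩).hasDerivWithinAt (s := Ici t)
        rw [hβr t le_rfl]
        exact this.congr (fun s hs => hβr s hs) (hβr t le_rfl)
      -- the derivative of `β` from the left is the limit of `F ∘ β`
      have hl : HasDerivWithinAt β (F (β t)) (Iic t) t := by
        refine hasDerivWithinAt_Iic_of_tendsto_deriv (s := Ico a t)
          (fun s hs => (hdl s hs).differentiableAt.differentiableWithinAt) ?_ hmem ?_
        · rw [ContinuousWithinAt, hβb]
          exact hβlim.mono_left (nhdsWithin_mono _ Ico_subset_Iio_self)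
        · rw [hβb]
          refine (hF.continuousAt.tendsto.comp hβlim).congr' ?_
          filter_upwards [hmem] with s hs using (hdl s hs).deriv.symm
      have := hl.union hr
      rwa [Iic_union_Ici, hasDerivWithinAt_univ] at this
    · rw [hβr t h.le]
      refine (hα t ⟨by linarith, by linarith [ht.2, min_le_left ε₀ ε₁]⟩).congr_of_eventuallyEq ?_
      filter_upwards [Ioi_mem_nhds h] with s hs using hβr s (le_of_lt hs)

theorem su2Y_le {a b c : ℝ} (hc : 0 < c) (hbc : c ≤ b) (hab : b ≤ a) :
    su2Y a b c ≤ -c ^ 2 := by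
  unfold su2Y
  nlinarith [mul_nonneg (sub_nonneg.2 hab) (sub_nonneg.2 hbc), sq_nonneg (a - b),
    mul_nonneg (sub_nonneg.2 hab) (hc.le.trans hbc)]

theorem su2Z_le {a b c : ℝ} (hc : 0 < c) (hbc : c ≤ b) (hab : b ≤ a) :
    su2Z a b c ≤ -c ^ 2 := by
  unfold su2Z
  nlinarith [sq_nonneg (a - b), mul_nonneg (sub_nonneg.2 hbc) hc.le,
    mul_nonneg (sub_nonneg.2 hab) hc.le]

theorem le_su2Y {a b c : ℝ} (hc : 0 < c) (hbc : c ≤ b) (hab : b ≤ a) :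
    -3 * a ^ 2 ≤ su2Y a b c := by
  unfold su2Y
  nlinarith [mul_nonneg (sub_nonneg.2 hab) (sub_nonneg.2 hbc), sq_nonneg (a - b),
    mul_nonneg (sub_nonneg.2 hab) (hc.le.trans hbc), mul_nonneg (sub_nonneg.2 hbc) hc.le]

theorem le_su2Z {a b c : ℝ} (hc : 0 < c) (hbc : c ≤ b) (hab : b ≤ a) :
    -3 * a ^ 2 ≤ su2Z a b c := by
  unfold su2Z
  nlinarith [mul_nonneg (sub_nonneg.2 hab) (sub_nonneg.2 hbc), sq_nonneg (a - b),
    mul_nonneg (sub_nonneg.2 hab) (hc.le.trans hbc), mul_nonneg (sub_nonneg.2 hbc) hc.le,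
    mul_nonneg (sub_nonneg.2 hab) hc.le]

/-- The right-hand side of the flow as a vector field on `ℝ³`. -/
noncomputable def su2Field (p : ℝ × ℝ × ℝ) : ℝ × ℝ × ℝ :=
  (-2 * p.1 * su2Y p.1 p.2.1 p.2.2 * su2Z p.1 p.2.1 p.2.2 / (p.1 * p.2.1 * p.2.2) ^ 2,
   -2 * p.2.1 * su2Z p.1 p.2.1 p.2.2 * su2X p.1 p.2.1 p.2.2 / (p.1 * p.2.1 * p.2.2) ^ 2,
   -2 * p.2.2 * su2X p.1 p.2.1 p.2.2 * su2Y p.1 p.2.1 p.2.2 / (p.1 * p.2.1 * p.2.2) ^ 2)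

theorem contDiffAt_su2Field {p : ℝ × ℝ × ℝ} (h1 : 0 < p.1) (h2 : 0 < p.2.1) (h3 : 0 < p.2.2) :
    ContDiffAt ℝ 1 su2Field p := by
  have hne : (p.1 * p.2.1 * p.2.2) ^ 2 ≠ 0 := by positivity
  unfold su2Field su2X su2Y su2Z
  refine ContDiffAt.prodMk ?_ (ContDiffAt.prodMk ?_ ?_) <;>
    exact ContDiffAt.div (by fun_prop) (by fun_prop) hne

theorem isSolSU2_iff {A B C : ℝ → ℝ} {s : Set ℝ} :
    IsSolSU2 A B C s ↔ ∀ t ∈ s, (0 < A t ∧ 0 < B t ∧ 0 < C t) ∧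
      HasDerivAt (fun t => (A t, B t, C t)) (su2Field (A t, B t, C t)) t := by
  refine forall₂_congr fun t _ => and_congr_right fun _ => ⟨?_, ?_⟩
  · rintro ⟨hA, hB, hC⟩
    exact hA.prodMk (hB.prodMk hC)
  · intro h
    have h2 := h.snd
    exact ⟨h.fst, h2.fst, h2.snd⟩

/-- Since `A Y - B X` is divisible by `A - B`, the difference `A - B` solves a linear equation
`u' = k u` with continuous `k`, and likewise `B - C`; so the ordering persists. -/
theorem su2_ordered {A B C : ℝ → ℝ} {s : Set ℝ} (hs : s.OrdConnected)
    (hsol : IsSolSU2 A B C s) (h0 : (0 : ℝ) ∈ s) (hBC : C 0 ≤ B 0) (hAB : B 0 ≤ A 0)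
    {t : ℝ} (ht : t ∈ s) (ht0 : 0 ≤ t) : C t ≤ B t ∧ B t ≤ A t := by
  have hsub : Icc 0 t ⊆ s := hs.out h0 ht
  have hA : ContinuousOn A (Icc 0 t) := fun r hr =>
    (hsol r (hsub hr)).2.1.continuousAt.continuousWithinAt
  have hB : ContinuousOn B (Icc 0 t) := fun r hr =>
    (hsol r (hsub hr)).2.2.1.continuousAt.continuousWithinAt
  have hC : ContinuousOn C (Icc 0 t) := fun r hr =>
    (hsol r (hsub hr)).2.2.2.continuousAt.continuousWithinAt
  have hne : ∀ r ∈ Icc 0 t, (A r * B r * C r) ^ 2 ≠ 0 := fun r hr => by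
    obtain ⟨⟨h1, h2, h3⟩, -⟩ := hsol r (hsub hr)
    positivity
  constructor
  · refine sub_nonneg.1 (nonneg_of_deriv_eq_mul (u := fun r => B r - C r)
      (k := fun r => -2 * su2X (A r) (B r) (C r) * (-5 * B r * C r
        - (B r ^ 2 + B r * C r + C r ^ 2) + 2 * A r * (B r + C r) - A r ^ 2)
        / (A r * B r * C r) ^ 2) ht0 ?_ ?_ (sub_nonneg.2 hBC))
    · unfold su2X
      exact ContinuousOn.div (by fun_prop) (by fun_prop) hne
    · intro r hr
      obtain ⟨-, -, h2, h3⟩ := hsol r (hsub hr)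
      refine (h2.sub h3).congr_deriv ?_
      unfold su2Y su2Z
      ring
  · refine sub_nonneg.1 (nonneg_of_deriv_eq_mul (u := fun r => A r - B r)
      (k := fun r => -2 * su2Z (A r) (B r) (C r) * (-5 * A r * B r
        - (A r ^ 2 + A r * B r + B r ^ 2) + 2 * C r * (A r + B r) - C r ^ 2)
        / (A r * B r * C r) ^ 2) ht0 ?_ ?_ (sub_nonneg.2 hAB))
    · unfold su2Z
      exact ContinuousOn.div (by fun_prop) (by fun_prop) hne
    · intro r hr
      obtain ⟨-, h1, h2, -⟩ := hsol r (hsub hr)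
      refine (h1.sub h2).congr_deriv ?_
      unfold su2X su2Y
      ring

/-- `(log (A / C))' = 8 Y (A - C) (A + C - B) / (A B C)²`, which is nonpositive because `Y ≤ 0`. -/
theorem su2_ratio_antitone {A B C : ℝ → ℝ} {s : Set ℝ} (hs : Convex ℝ s)
    (hsol : IsSolSU2 A B C s) (hord : ∀ t ∈ s, C t ≤ B t ∧ B t ≤ A t) :
    AntitoneOn (fun t => A t / C t) s := by
  have hd : ∀ t ∈ s, HasDerivAt (fun t => A t / C t)
      (8 * A t * su2Y (A t) (B t) (C t) * (A t - C t) * (A t + C t - B t)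
        / (C t * (A t * B t * C t) ^ 2)) t := by
    intro t ht
    obtain ⟨⟨h1, h2, h3⟩, hA, -, hC⟩ := hsol t ht
    refine (hA.div hC h3.ne').congr_deriv ?_
    unfold su2X su2Y su2Z
    field_simp
    ring
  refine antitoneOn_of_deriv_nonpos hs (fun t ht => (hd t ht).continuousAt.continuousWithinAt)
    (fun t ht => (hd t (interior_subset ht)).differentiableAt.differentiableWithinAt) ?_
  intro t ht
  have ht := interior_subset ht
  obtain ⟨⟨h1, h2, h3⟩, -⟩ := hsol t ht
  obtain ⟨hCB, hBA⟩ := hord t ht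
  rw [(hd t ht).deriv]
  have hY : su2Y (A t) (B t) (C t) ≤ 0 := (su2Y_le h3 hCB hBA).trans (by nlinarith)
  refine div_nonpos_of_nonpos_of_nonneg ?_ (by positivity)
  have : 0 ≤ 8 * A t * (A t - C t) * (A t + C t - B t) :=
    mul_nonneg (mul_nonneg (by positivity) (by linarith)) (by linarith)
  nlinarith

theorem su2_sq_deriv {A B C : ℝ → ℝ} {s : Set ℝ} (hsol : IsSolSU2 A B C s) {t : ℝ}
    (ht : t ∈ s) :
    HasDerivAt (fun r => A r ^ 2)
      (-4 * (su2Y (A t) (B t) (C t) * su2Z (A t) (B t) (C t) / (B t * C t) ^ 2)) t := by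
  obtain ⟨⟨h1, h2, h3⟩, hA, -⟩ := hsol t ht
  refine (hA.pow 2).congr_deriv ?_
  field_simp
  ring

/-- Two-sided bound on `Y Z / (B C)² = -(A²)' / 4` in terms of the initial ratio `a₀ / c₀`: it follows
from `C² ≤ -Y, -Z ≤ 3 A²` for ordered triples. -/
theorem su2_curv_bounds {a b c a₀ c₀ : ℝ} (hc : 0 < c) (hbc : c ≤ b) (hab : b ≤ a)
    (hc₀ : 0 < c₀) (ha₀ : 0 < a₀) (hr : a * c₀ ≤ a₀ * c) :
    c₀ ^ 2 / a₀ ^ 2 ≤ su2Y a b c * su2Z a b c / (b * c) ^ 2 ∧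
      su2Y a b c * su2Z a b c / (b * c) ^ 2 ≤ 12 * a₀ ^ 4 / c₀ ^ 4 := by
  have hb : 0 < b := hc.trans_le hbc
  have ha : 0 < a := hb.trans_le hab
  have hY := su2Y_le hc hbc hab
  have hZ := su2Z_le hc hbc hab
  have hY' := le_su2Y hc hbc hab
  have hZ' := le_su2Z hc hbc hab
  have hr' : c₀ / a₀ ≤ c / a := by rw [div_le_div_iff₀ ha₀ ha]; linarith
  have hr'' : a / c ≤ a₀ / c₀ := by rw [div_le_div_iff₀ hc hc₀]; linarith
  constructor
  · calc c₀ ^ 2 / a₀ ^ 2 = (c₀ / a₀) ^ 2 := by rw [div_pow]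
      _ ≤ (c / a) ^ 2 := by gcongr
      _ ≤ (c / b) ^ 2 := by gcongr
      _ = c ^ 2 * c ^ 2 / (b * c) ^ 2 := by field_simp
      _ ≤ _ := by
        gcongr ?_ / _
        nlinarith [sq_nonneg c, mul_nonneg (sub_nonneg.2 hY) (sub_nonneg.2 hZ)]
  · have hYZ : su2Y a b c * su2Z a b c ≤ (3 * a ^ 2) * (3 * a ^ 2) := by
      rw [← neg_mul_neg]
      apply mul_le_mul <;> nlinarith
    calc su2Y a b c * su2Z a b c / (b * c) ^ 2 ≤ (3 * a ^ 2) * (3 * a ^ 2) / (b * c) ^ 2 := by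
          gcongr
      _ ≤ (3 * a ^ 2) * (3 * a ^ 2) / (c * c) ^ 2 := by gcongr
      _ = 9 * (a / c) ^ 4 := by field_simp; ring
      _ ≤ 12 * (a₀ / c₀) ^ 4 := by gcongr; norm_num
      _ = _ := by rw [div_pow]; ring

/-- A maximal solution with finite lifespan `T₀` does not stay in a compact cube `[m, M]³` with
`m > 0`. -/
theorem exists_lt_of_isMaxSolSU2 {A B C : ℝ → ℝ} {T₀ m M : ℝ} (hT₀ : 0 < T₀)
    (hmax : IsMaxSolSU2 A B C (T₀ : EReal)) (hm : 0 < m) :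
    ∃ t, 0 ≤ t ∧ t < T₀ ∧
      ¬ ((m ≤ A t ∧ A t ≤ M) ∧ (m ≤ B t ∧ B t ≤ M) ∧ (m ≤ C t ∧ C t ≤ M)) := by
  by_contra! hcon
  obtain ⟨hsol, hno⟩ := hmax
  rw [isSolSU2_iff] at hsol
  set γ : ℝ → ℝ × ℝ × ℝ := fun t => (A t, B t, C t) with hγdef
  have hγ : ∀ t ∈ Ico 0 T₀, HasDerivAt γ (su2Field (γ t)) t := fun t ht =>
    (hsol t ⟨ht.1, EReal.coe_lt_coe_iff.2 ht.2⟩).2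
  set K : Set (ℝ × ℝ × ℝ) := Icc m M ×ˢ Icc m M ×ˢ Icc m M with hKdef
  have hK : IsCompact K := isCompact_Icc.prod (isCompact_Icc.prod isCompact_Icc)
  have hγK : ∀ t ∈ Ico 0 T₀, γ t ∈ K := fun t ht => hcon t ht.1 ht.2
  have hF : ∀ p ∈ K, ContDiffAt ℝ 1 su2Field p := fun p hp =>
    contDiffAt_su2Field (hm.trans_le hp.1.1) (hm.trans_le hp.2.1.1) (hm.trans_le hp.2.2.1)
  obtain ⟨N, hN⟩ := hK.exists_bound_of_continuousOn
    (fun p hp => (hF p hp).continuousAt.continuousWithinAt)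
  obtain ⟨p, hp⟩ := exists_tendsto_of_deriv_bounded hT₀ hγ (fun t ht => hN _ (hγK t ht))
  have hpK : p ∈ K := hK.isClosed.mem_of_tendsto hp
    (by filter_upwards [Ico_mem_nhdsLT hT₀] with t ht using hγK t ht)
  have hU : {q : ℝ × ℝ × ℝ | 0 < q.1 ∧ 0 < q.2.1 ∧ 0 < q.2.2} ∈ 𝓝 p := by
    refine IsOpen.mem_nhds ?_
      ⟨hm.trans_le hpK.1.1, hm.trans_le hpK.2.1.1, hm.trans_le hpK.2.2.1⟩
    exact (isOpen_lt continuous_const continuous_fst).inter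
      ((isOpen_lt continuous_const continuous_snd.fst).inter
        (isOpen_lt continuous_const continuous_snd.snd))
  obtain ⟨β, ε, hε, hβγ, hβU, hβ⟩ := exists_extension hT₀ hγ hp (hF p hpK) hU
  refine hno (fun t => (β t).1) (fun t => (β t).2.1) (fun t => (β t).2.2)
    ((T₀ + ε : ℝ) : EReal) (EReal.coe_lt_coe_iff.2 (by linarith)) ?_ ?_
  · rw [isSolSU2_iff]
    rintro t ⟨ht0, htT⟩
    have htT := EReal.coe_lt_coe_iff.1 htT
    refine ⟨?_, hβ t ⟨ht0, htT⟩⟩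
    rcases lt_or_ge t T₀ with h | h
    · rw [hβγ t h]
      exact (hsol t ⟨ht0, EReal.coe_lt_coe_iff.2 h⟩).1
    · exact hβU t ⟨h, htT⟩
  · intro t _ ht
    rw [hβγ t (EReal.coe_lt_coe_iff.1 ht)]
    exact ⟨rfl, rfl, rfl⟩

/-- For a maximal positive solution of the `SU(2)` negative cross curvature flow with
`A0 ≥ B0 ≥ C0 > 0`: one has `d(A²)/dt ≤ -4C0²/A0²` along the flow, hence the solution
exists only up to a finite time `T0 > 0`, with `A, B, C → 0` as `t → T0⁻` and
`√(48(T0 - t))·A0²/C0² ≥ A(t) ≥ 2√(T0 - t)·C0/A0` on `[0, T0)`. -/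
theorem su2_finite_time_extinction
    (A0 B0 C0 : ℝ) (hC0 : 0 < C0) (hBC0 : B0 ≥ C0) (hAB0 : A0 ≥ B0)
    (A B C : ℝ → ℝ) (T : EReal) (hT : 0 < T)
    (hmax : IsMaxSolSU2 A B C T)
    (hinitA : A 0 = A0) (hinitB : B 0 = B0) (hinitC : C 0 = C0) :
    (∀ t : ℝ, 0 ≤ t → (t : EReal) < T →
      deriv (fun s => A s ^ 2) t ≤ -4 * C0 ^ 2 / A0 ^ 2) ∧
    ∃ T0 : ℝ, 0 < T0 ∧ T = (T0 : EReal) ∧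
      Filter.Tendsto A (nhdsWithin T0 (Set.Iio T0)) (nhds 0) ∧
      Filter.Tendsto B (nhdsWithin T0 (Set.Iio T0)) (nhds 0) ∧
      Filter.Tendsto C (nhdsWithin T0 (Set.Iio T0)) (nhds 0) ∧
      ∀ t : ℝ, 0 ≤ t → t < T0 →
        Real.sqrt (48 * (T0 - t)) * A0 ^ 2 / C0 ^ 2 ≥ A t ∧
        A t ≥ 2 * Real.sqrt (T0 - t) * C0 / A0 := by
  set S : Set ℝ := {t : ℝ | 0 ≤ t ∧ (t : EReal) < T} with hS
  have hsol : IsSolSU2 A B C S := hmax.1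
  have hSord : S.OrdConnected := ⟨fun x hx y hy z hz =>
    ⟨hx.1.trans hz.1, (EReal.coe_le_coe_iff.2 hz.2).trans_lt hy.2⟩⟩
  have hSconv : Convex ℝ S := hSord.convex
  have h0S : (0 : ℝ) ∈ S := ⟨le_rfl, by simpa using hT⟩
  have hA0 : 0 < A0 := by linarith
  have hord : ∀ t ∈ S, C t ≤ B t ∧ B t ≤ A t := fun t ht =>
    su2_ordered hSord hsol h0S (by linarith) (by linarith) ht ht.1
  have hratio : ∀ t ∈ S, A t * C0 ≤ A0 * C t := by
    intro t ht
    have h := su2_ratio_antitone hSconv hsol hord h0S ht ht.1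
    simp only [hinitA, hinitC] at h
    rwa [div_le_div_iff₀ (hsol t ht).1.2.2 hC0] at h
  have hpos : ∀ t ∈ S, 0 < A t ∧ 0 < B t ∧ 0 < C t := fun t ht => (hsol t ht).1
  have hderiv : ∀ t ∈ S, deriv (fun s => A s ^ 2) t ≤ -4 * C0 ^ 2 / A0 ^ 2 ∧
      -48 * A0 ^ 4 / C0 ^ 4 ≤ deriv (fun s => A s ^ 2) t := by
    intro t ht
    rw [(su2_sq_deriv hsol ht).deriv]
    obtain ⟨h1, h2⟩ := su2_curv_bounds (hpos t ht).2.2 (hord t ht).1 (hord t ht).2 hC0 hA0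
      (hratio t ht)
    have e1 : -4 * C0 ^ 2 / A0 ^ 2 = -4 * (C0 ^ 2 / A0 ^ 2) := by ring
    have e2 : -48 * A0 ^ 4 / C0 ^ 4 = -4 * (12 * A0 ^ 4 / C0 ^ 4) := by ring
    rw [e1, e2]
    constructor <;> linarith
  refine ⟨fun t h1 h2 => (hderiv t ⟨h1, h2⟩).1, ?_⟩
  have hcont : ContinuousOn (fun s => A s ^ 2) S := fun t ht =>
    (su2_sq_deriv hsol ht).continuousAt.continuousWithinAt
  have hdiff : DifferentiableOn ℝ (fun s => A s ^ 2) (interior S) := fun t ht =>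
    (su2_sq_deriv hsol (interior_subset ht)).differentiableAt.differentiableWithinAt
  have hup := hSconv.image_sub_le_mul_sub_of_deriv_le hcont hdiff
    (fun t ht => (hderiv t (interior_subset ht)).1)
  have hlow := hSconv.mul_sub_le_image_sub_of_le_deriv hcont hdiff
    (fun t ht => (hderiv t (interior_subset ht)).2)
  have hneg : -4 * C0 ^ 2 / A0 ^ 2 < 0 := by
    rw [neg_mul, neg_div]; exact neg_neg_of_pos (by positivity)
  set m : ℝ := -4 * C0 ^ 2 / A0 ^ 2 with hm
  have hTtop : T ≠ ⊤ := by
    rintro rfl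
    -- the time `-A0²/m` at which the linear upper bound for `A²` vanishes
    have ht0 : 0 ≤ -A0 ^ 2 / m := div_nonneg_of_nonpos (by nlinarith) hneg.le
    have htS : -A0 ^ 2 / m ∈ S := ⟨ht0, EReal.coe_lt_top _⟩
    have h := hup 0 h0S _ htS ht0
    simp only [hinitA, sub_zero, mul_div_cancel₀ _ hneg.ne] at h
    nlinarith [(hpos _ htS).1]
  lift T to ℝ using ⟨hTtop, ((EReal.bot_lt_zero.trans hT).ne')⟩
  have hT0 : 0 < T := by exact_mod_cast hT
  have hmemS : ∀ t, 0 ≤ t → t < T → t ∈ S := fun t h1 h2 => ⟨h1, EReal.coe_lt_coe_iff.2 h2⟩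
  have hanti : ∀ x ∈ S, ∀ y ∈ S, x ≤ y → A y ≤ A x := by
    intro x hx y hy hxy
    have h := hup x hx y hy hxy
    refine (sq_le_sq₀ (hpos y hy).1.le (hpos x hx).1.le).1 ?_
    nlinarith
  have hAlim : Tendsto A (𝓝[<] T) (𝓝 0) := by
    refine tendsto_order.2 ⟨fun e he => ?_, fun e he => ?_⟩
    · filter_upwards [Ico_mem_nhdsLT hT0] with t ht
      exact he.trans (hpos t (hmemS t ht.1 ht.2)).1
    · -- if `A ≥ e` throughout, the solution stays in a compact cube of positive triples
      obtain ⟨t, ht0, htT, hex⟩ := exists_lt_of_isMaxSolSU2 (M := A0) hT0 hmax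
        (m := e * C0 / A0) (by positivity)
      have htS := hmemS t ht0 htT
      have hAt : A t < e := by
        by_contra! hle
        refine hex ?_
        have h1 := hanti 0 h0S t htS ht0
        rw [hinitA] at h1
        have h2 := hord t htS
        have h3 : e * C0 / A0 ≤ C t := by
          rw [div_le_iff₀ hA0]
          nlinarith [hratio t htS]
        refine ⟨⟨?_, ?_⟩, ⟨?_, ?_⟩, ⟨?_, ?_⟩⟩ <;> linarith
      filter_upwards [Ico_mem_nhdsLT htT] with r hr
      exact (hanti t htS r (hmemS r (ht0.trans hr.1) hr.2) hr.1).trans_lt hAt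
  have hBlim : Tendsto B (𝓝[<] T) (𝓝 0) := by
    refine squeeze_zero' ?_ ?_ hAlim <;> filter_upwards [Ico_mem_nhdsLT hT0] with t ht
    · exact (hpos t (hmemS t ht.1 ht.2)).2.1.le
    · exact (hord t (hmemS t ht.1 ht.2)).2
  have hClim : Tendsto C (𝓝[<] T) (𝓝 0) := by
    refine squeeze_zero' ?_ ?_ hBlim <;> filter_upwards [Ico_mem_nhdsLT hT0] with t ht
    · exact (hpos t (hmemS t ht.1 ht.2)).2.2.le
    · exact (hord t (hmemS t ht.1 ht.2)).1
  refine ⟨T, hT0, rfl, hAlim, hBlim, hClim, fun t ht0 htT => ?_⟩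
  have htS := hmemS t ht0 htT
  -- let the second time tend to `T` in the increment bounds for `A²`
  have hl : Tendsto (fun y => A y ^ 2 - A t ^ 2) (𝓝[<] T) (𝓝 (-A t ^ 2)) := by
    simpa using (hAlim.pow 2).sub_const (A t ^ 2)
  have hlin : ∀ c : ℝ, Tendsto (fun y => c * (y - t)) (𝓝[<] T) (𝓝 (c * (T - t))) := fun c =>
    (Continuous.tendsto (by fun_prop) T).mono_left nhdsWithin_le_nhds
  have hev : ∀ᶠ y in 𝓝[<] T, y ∈ S ∧ t ≤ y := by
    filter_upwards [Ico_mem_nhdsLT htT] with y hy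
    exact ⟨hmemS y (ht0.trans hy.1) hy.2, hy.1⟩
  have h1 : -A t ^ 2 ≤ m * (T - t) :=
    le_of_tendsto_of_tendsto hl (hlin m) (hev.mono fun y hy => hup t htS y hy.1 hy.2)
  have h2 : -48 * A0 ^ 4 / C0 ^ 4 * (T - t) ≤ -A t ^ 2 :=
    le_of_tendsto_of_tendsto (hlin _) hl (hev.mono fun y hy => hlow t htS y hy.1 hy.2)
  have hTt : 0 ≤ T - t := by linarith
  have hAt := (hpos t htS).1
  constructor
  · refine (sq_le_sq₀ (by positivity) (by positivity)).1 ?_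
    rw [div_pow, mul_pow, Real.sq_sqrt (by positivity)]
    calc A t ^ 2 ≤ -(-48 * A0 ^ 4 / C0 ^ 4 * (T - t)) := by linarith
      _ = _ := by field_simp
  · refine (sq_le_sq₀ (by positivity) hAt.le).1 ?_
    rw [div_pow, mul_pow, mul_pow, Real.sq_sqrt hTt]
    calc 2 ^ 2 * (T - t) * C0 ^ 2 / A0 ^ 2 = -(m * (T - t)) := by rw [hm]; field_simp; ring
      _ ≤ A t ^ 2 := by linarith
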